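/- Let w̃ᵢ = Γ_pr⁻¹ ŵᵢ and let 𝓜_r⁻¹ = { Γ_pr⁻¹ + J Jᵀ : J a real n×n matrix with rank(J) ≤ r }. For any L ∈ 𝓛, the matrix B̂ = Γ_pr⁻¹ + Σ_{i=1}^{r} δᵢ² w̃ᵢ w̃ᵢᵀ minimizes L(B, Γ_pos⁻¹) over B ∈ 𝓜_r⁻¹; moreover, if δ₁² > δ₂² > ⋯ > δ_r² > δ_{r+1}², then B̂ is the unique minimizer. -/

import Mathlib

open Matrix MeasureTheory Polynomial Filter Finset

/-- `σ` enumerates (with multiplicity) the generalized eigenvalues of the pencil `(A, B)`,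
i.e. the eigenvalues of `B⁻¹ * A`. -/
def IsGenEigs {n : ℕ} (A B : Matrix (Fin n) (Fin n) ℝ) (σ : Fin n → ℝ) : Prop :=
  (B⁻¹ * A).charpoly = ∏ i : Fin n, (Polynomial.X - Polynomial.C (σ i))

/-- Membership in the class 𝓤. -/
def MemU (f : ℝ → ℝ) : Prop :=
  ∃ f' : ℝ → ℝ,
    (∀ x ∈ Set.Ioi (0:ℝ), HasDerivAt f (f' x) x) ∧
    ContinuousOn f' (Set.Ioi (0:ℝ)) ∧
    (∀ x ∈ Set.Ioi (0:ℝ), x ≠ 1 → f' x * (1 - x) < 0) ∧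
    Filter.Tendsto f Filter.atTop Filter.atTop

/-- The approximation class `𝓜_r⁻¹`: matrices of the form `Γpr⁻¹ + J Jᵀ` with
`rank J ≤ r`. -/
def MInvClass {n : ℕ} (Γpr : Matrix (Fin n) (Fin n) ℝ) (r : ℕ) :
    Set (Matrix (Fin n) (Fin n) ℝ) :=
  {M | ∃ J : Matrix (Fin n) (Fin n) ℝ, J.rank ≤ r ∧ M = Γpr⁻¹ + J * Jᵀ}

/-!
In the coordinates given by the suitably scaled generalized eigenvectors, `H + Γpr⁻¹` becomes the
identity and `Γpr⁻¹` becomes `diagonal a` with `a i = (1 + δ i ^ 2)⁻¹`. A competitor becomes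
`diagonal a + A` with `A` positive semidefinite of rank at most `r`, and its loss is the sum of `f`
over its eigenvalues `σ`. By Weyl's inequality the increasingly sorted `σ` satisfies
`σ k ≤ a (k + r)`, while the `r` largest eigenvalues are unconstrained. As `f` decreases on `(0, 1]`
and is smallest at `1`, the spectrum `1, …, 1, a r, …, a (n - 1)` is optimal.

Equality of the losses forces this spectrum. Then `0 ≤ A ≤ diagonal (1 - a)`, and the trace of `A`
is the sum of the `r` largest entries of `1 - a`. Under a spectral gap, the equality case of the
bathtub principle confines the range of `A`, of dimension at most `r`, to the first `r`
coordinates. There the diagonals of `A` and `diagonal (1 - a)` agree, hence so do the matrices.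
-/

theorem MemU.strictAntiOn {f : ℝ → ℝ} (hf : MemU f) : StrictAntiOn f (Set.Ioc 0 1) := by
  obtain ⟨f', hderiv, -, hsign, -⟩ := hf
  refine strictAntiOn_of_hasDerivWithinAt_neg (f' := f') (convex_Ioc 0 1)
    (fun x hx => (hderiv x hx.1).continuousAt.continuousWithinAt)
    (fun x hx => (hderiv x (interior_subset hx).1).hasDerivWithinAt) fun x hx => ?_
  rw [interior_Ioc] at hx
  exact neg_of_mul_neg_left (hsign x hx.1 hx.2.ne) (sub_nonneg.2 hx.2.le)

theorem MemU.apply_one_lt {f : ℝ → ℝ} (hf : MemU f) {x : ℝ} (hx : 1 < x) : f 1 < f x := by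
  obtain ⟨f', hderiv, -, hsign, -⟩ := hf
  have hpos : ∀ y ∈ Set.Ici (1 : ℝ), 0 < y := fun y hy => zero_lt_one.trans_le hy
  refine strictMonoOn_of_hasDerivWithinAt_pos (f' := f') (convex_Ici 1)
    (fun y hy => (hderiv y (hpos y hy)).continuousAt.continuousWithinAt)
    (fun y hy => (hderiv y (hpos y (interior_subset hy))).hasDerivWithinAt) (fun y hy => ?_)
    Set.self_mem_Ici hx.le hx
  rw [interior_Ici] at hy
  exact pos_of_mul_neg_left (hsign y (hpos y (Set.Ioi_subset_Ici_self hy)) (ne_of_gt hy))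
    (sub_nonpos.2 (le_of_lt hy))

section LossComparison

variable {f : ℝ → ℝ}

theorem apply_lt_apply_of_ne (hanti : StrictAntiOn f (Set.Ioc 0 1))
    (hone : ∀ x, 1 < x → f 1 < f x) {x y : ℝ} (hx : 0 < x) (hy : y ≤ 1) (hxy : x ≤ y ∨ y = 1)
    (hne : x ≠ y) : f y < f x := by
  rcases hne.lt_or_gt with hlt | hgt
  · exact hanti ⟨hx, hlt.le.trans hy⟩ ⟨hx.trans hlt, hy⟩ hlt
  · obtain rfl := hxy.resolve_left hgt.not_ge
    exact hone x hgt

theorem apply_le_apply_of_le_or_eq_one (hanti : StrictAntiOn f (Set.Ioc 0 1))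
    (hone : ∀ x, 1 < x → f 1 < f x) {x y : ℝ} (hx : 0 < x) (hy : y ≤ 1) (hxy : x ≤ y ∨ y = 1) :
    f y ≤ f x := by
  rcases eq_or_ne x y with rfl | hne
  · exact le_rfl
  · exact (apply_lt_apply_of_ne hanti hone hx hy hxy hne).le

theorem eq_of_sum_apply_le_sum_apply {ι : Type*} [Fintype ι] {t τ : ι → ℝ}
    (hanti : StrictAntiOn f (Set.Ioc 0 1)) (hone : ∀ x, 1 < x → f 1 < f x)
    (hτ : ∀ i, 0 < τ i) (ht : ∀ i, t i ≤ 1) (hτt : ∀ i, τ i ≤ t i ∨ t i = 1)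
    (hsum : ∑ i, f (τ i) ≤ ∑ i, f (t i)) : τ = t := by
  by_contra hne
  obtain ⟨i, hi⟩ := Function.ne_iff.1 hne
  exact hsum.not_gt <| sum_lt_sum
    (fun j _ => apply_le_apply_of_le_or_eq_one hanti hone (hτ j) (ht j) (hτt j))
    ⟨i, mem_univ i, apply_lt_apply_of_ne hanti hone (hτ i) (ht i) (hτt i) hi⟩

end LossComparison

section QuadraticForm

variable {𝕜 E ι : Type*} [RCLike 𝕜] [NormedAddCommGroup E] [InnerProductSpace 𝕜 E] [Fintype ι]
  {b : OrthonormalBasis ι 𝕜 E} {T : E →ₗ[𝕜] E} {s : ι → ℝ}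

theorem re_inner_map_self_eq_sum (hT : ∀ i, T (b i) = (s i : 𝕜) • b i) (x : E) :
    RCLike.re (inner 𝕜 x (T x)) = ∑ i, s i * ‖inner 𝕜 (b i) x‖ ^ 2 := by
  have hTx : T x = ∑ i, ((s i : 𝕜) * inner 𝕜 (b i) x) • b i := by
    conv_lhs => rw [← b.sum_repr' x, map_sum]
    simp only [map_smul, hT, smul_smul, mul_comm]
  rw [hTx, inner_sum, map_sum]
  refine sum_congr rfl fun i _ => ?_
  rw [inner_smul_right, mul_assoc, RCLike.re_ofReal_mul, inner_mul_symm_re_eq_norm, norm_mul,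
    norm_inner_symm x, ← sq]

theorem mul_norm_sq_le_re_inner_map_self (hT : ∀ i, T (b i) = (s i : 𝕜) • b i) {m : ℝ} {x : E}
    (hm : ∀ i, inner 𝕜 (b i) x ≠ 0 → m ≤ s i) :
    m * ‖x‖ ^ 2 ≤ RCLike.re (inner 𝕜 x (T x)) := by
  rw [re_inner_map_self_eq_sum hT, ← b.sum_sq_norm_inner_right x, mul_sum]
  refine sum_le_sum fun i _ => ?_
  by_cases hi : inner 𝕜 (b i) x = 0
  · simp [hi]
  · exact mul_le_mul_of_nonneg_right (hm i hi) (sq_nonneg _)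

theorem re_inner_map_self_le_mul_norm_sq (hT : ∀ i, T (b i) = (s i : 𝕜) • b i) {m : ℝ} {x : E}
    (hm : ∀ i, inner 𝕜 (b i) x ≠ 0 → s i ≤ m) :
    RCLike.re (inner 𝕜 x (T x)) ≤ m * ‖x‖ ^ 2 := by
  rw [re_inner_map_self_eq_sum hT, ← b.sum_sq_norm_inner_right x, mul_sum]
  refine sum_le_sum fun i _ => ?_
  by_cases hi : inner 𝕜 (b i) x = 0
  · simp [hi]
  · exact mul_le_mul_of_nonneg_right (hm i hi) (sq_nonneg _)

theorem exists_mem_ne_zero_forall_inner_eq_zero {N : Submodule 𝕜 E} [FiniteDimensional 𝕜 N]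
    (u : ι → E) (hN : Fintype.card ι < Module.finrank 𝕜 N) :
    ∃ x ∈ N, x ≠ 0 ∧ ∀ i, inner 𝕜 (u i) x = 0 := by
  let φ : N →ₗ[𝕜] ι → 𝕜 := LinearMap.pi fun i => (innerₛₗ 𝕜 (u i)).comp N.subtype
  have hker : LinearMap.ker φ ≠ ⊥ := φ.ker_ne_bot_of_finrank_lt (by simpa using hN)
  obtain ⟨x, hx, hx0⟩ := Submodule.exists_mem_ne_zero_of_ne_bot hker
  exact ⟨x, x.2, by simpa using hx0, fun i => congrFun (LinearMap.mem_ker.1 hx) i⟩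

/- Courant–Fischer: by counting dimensions, `N` contains a vector orthogonal to all `v j` with
`j < k` and all `e j` with `l < j`. -/
theorem eigenvalue_le_eigenvalue_of_re_inner_le {n : ℕ} {v e : OrthonormalBasis (Fin n) 𝕜 E}
    {T D : E →ₗ[𝕜] E} {μ a : Fin n → ℝ} (hT : ∀ i, T (v i) = (μ i : 𝕜) • v i)
    (hD : ∀ i, D (e i) = (a i : 𝕜) • e i) (hμ : Monotone μ) (ha : Monotone a)
    {N : Submodule 𝕜 E} (hN : ∀ x ∈ N, RCLike.re (inner 𝕜 x (T x)) ≤ RCLike.re (inner 𝕜 x (D x)))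
    {k l : Fin n} (hkl : (k : ℕ) + n ≤ l + Module.finrank 𝕜 N) : μ k ≤ a l := by
  have : FiniteDimensional 𝕜 E := v.toBasis.finiteDimensional_of_finite
  obtain ⟨x, hxN, hx0, hx⟩ := exists_mem_ne_zero_forall_inner_eq_zero (N := N)
    (Sum.elim (fun j : Set.Iio k => v j) fun j : Set.Ioi l => e j) (by simp; omega)
  have hlow : μ k * ‖x‖ ^ 2 ≤ RCLike.re (inner 𝕜 x (T x)) :=
    mul_norm_sq_le_re_inner_map_self hT fun i hi =>
      hμ (not_lt.1 fun hik => hi (hx (.inl ⟨i, hik⟩)))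
  have hupp : RCLike.re (inner 𝕜 x (D x)) ≤ a l * ‖x‖ ^ 2 :=
    re_inner_map_self_le_mul_norm_sq hD fun i hi =>
      ha (not_lt.1 fun hli => hi (hx (.inr ⟨i, hli⟩)))
  exact le_of_mul_le_mul_right (hlow.trans ((hN x hxN).trans hupp)) (by positivity)

end QuadraticForm

theorem exists_perm_of_prod_X_sub_C_eq {R ι : Type*} [CommRing R] [IsDomain R] [Fintype ι]
    {σ τ : ι → R} (h : ∏ i, (X - C (σ i)) = ∏ i, (X - C (τ i))) :
    ∃ p : Equiv.Perm ι, ∀ i, τ (p i) = σ i := by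
  classical
  have hroots (ρ : ι → R) : (∏ i, (X - C (ρ i))).roots = univ.val.map ρ := by
    rw [← roots_multiset_prod_X_sub_C (univ.val.map ρ), Multiset.map_map]
    rfl
  have hmap : univ.val.map σ = univ.val.map τ := by rw [← hroots, h, hroots]
  have hfiber (c : R) : Nonempty ({i // σ i = c} ≃ {i // τ i = c}) := by
    refine Fintype.card_eq.1 ?_
    have hcount := congrArg (Multiset.count c) hmap
    simpa only [Multiset.count_map, eq_comm (a := c), ← filter_val, card_val,
      ← Fintype.card_subtype] using hcount
  exact ⟨Equiv.ofFiberEquiv fun c => (hfiber c).some, Equiv.ofFiberEquiv_map _⟩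

theorem sum_apply_eq_of_prod_X_sub_C_eq {R M ι : Type*} [CommRing R] [IsDomain R]
    [AddCommMonoid M] [Fintype ι] {σ τ : ι → R} (h : ∏ i, (X - C (σ i)) = ∏ i, (X - C (τ i)))
    (f : R → M) : ∑ i, f (σ i) = ∑ i, f (τ i) := by
  obtain ⟨p, hp⟩ := exists_perm_of_prod_X_sub_C_eq h
  rw [← Equiv.sum_comp p fun i => f (τ i)]
  exact sum_congr rfl fun i _ => congrArg f (hp i).symm

section Spectrum

variable {ι : Type*} [Fintype ι] [DecidableEq ι] {S : Matrix ι ι ℝ} {σ : ι → ℝ}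

theorem exists_perm_eigenvalues_eq (hS : S.IsHermitian)
    (hσ : S.charpoly = ∏ i, (X - C (σ i))) :
    ∃ p : Equiv.Perm ι, ∀ i, hS.eigenvalues (p i) = σ i :=
  exists_perm_of_prod_X_sub_C_eq (hσ.symm.trans hS.charpoly_eq)

theorem pos_of_charpoly_eq_prod (hS : S.PosDef) (hσ : S.charpoly = ∏ i, (X - C (σ i))) (i : ι) :
    0 < σ i := by
  obtain ⟨p, hp⟩ := exists_perm_eigenvalues_eq hS.1 hσ
  exact hp i ▸ hS.eigenvalues_pos (p i)

theorem toEuclideanLin_eigenvectorBasis (hS : S.IsHermitian) (i : ι) :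
    toEuclideanLin S (hS.eigenvectorBasis i) = hS.eigenvalues i • hS.eigenvectorBasis i := by
  rw [toLpLin_apply, hS.mulVec_eigenvectorBasis, WithLp.toLp_smul]

theorem exists_orthonormalBasis_of_charpoly_eq_prod (hS : S.IsHermitian)
    (hσ : S.charpoly = ∏ i, (X - C (σ i))) :
    ∃ v : OrthonormalBasis ι ℝ (EuclideanSpace ℝ ι), ∀ i, toEuclideanLin S (v i) = σ i • v i := by
  obtain ⟨p, hp⟩ := exists_perm_eigenvalues_eq hS hσ
  refine ⟨hS.eigenvectorBasis.reindex p.symm, fun i => ?_⟩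
  rw [OrthonormalBasis.reindex_apply, Equiv.symm_symm, ← hp,
    toEuclideanLin_eigenvectorBasis]

theorem posSemidef_one_sub_of_charpoly_eq_prod (hS : S.IsHermitian)
    (hσ : S.charpoly = ∏ i, (X - C (σ i))) (hσ1 : ∀ i, σ i ≤ 1) : (1 - S).PosSemidef := by
  obtain ⟨v, hv⟩ := exists_orthonormalBasis_of_charpoly_eq_prod hS hσ
  refine .of_dotProduct_mulVec_nonneg (isHermitian_one.sub hS) fun x => ?_
  have hle := re_inner_map_self_le_mul_norm_sq hv (x := WithLp.toLp 2 x) fun i _ => hσ1 i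
  rw [one_mul, ← real_inner_self_eq_norm_sq, RCLike.re_to_real, toLpLin_apply,
    EuclideanSpace.inner_toLp_toLp, EuclideanSpace.inner_toLp_toLp] at hle
  rwa [sub_mulVec, one_mulVec, dotProduct_sub, sub_nonneg, dotProduct_comm (star x),
    dotProduct_comm (star x)]

end Spectrum

theorem finrank_ker_toEuclideanLin_add_rank {𝕜 ι κ : Type*} [RCLike 𝕜] [Finite ι] [Fintype κ]
    [DecidableEq κ] (A : Matrix ι κ 𝕜) :
    Module.finrank 𝕜 (LinearMap.ker (toEuclideanLin A)) + A.rank = Fintype.card κ := by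
  classical
  have := Fintype.ofFinite ι
  rw [A.rank_eq_finrank_range_toLin (PiLp.basisFun 2 𝕜 ι) (PiLp.basisFun 2 𝕜 κ),
    ← toLpLin_eq_toLin, add_comm, LinearMap.finrank_range_add_finrank_ker,
    finrank_euclideanSpace]

theorem exists_perm_val_add_eq (n r : ℕ) :
    ∃ ρ : Equiv.Perm (Fin n), ∀ i : Fin n, r ≤ (i : ℕ) → (ρ i : ℕ) + r = i := by
  rcases lt_or_ge r n with hr | hr
  · have : NeZero n := ⟨by omega⟩
    refine ⟨Equiv.subRight ⟨r, hr⟩, fun i hi => ?_⟩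
    rw [Equiv.subRight_apply, Fin.sub_val_of_le hi, Nat.sub_add_cancel hi]
  · exact ⟨1, fun i hi => by omega⟩

/- Weyl's inequality for a perturbation of rank at most `r`: it vanishes on its kernel, of
codimension at most `r`, so the sorted `σ` and `a` are comparable after a shift by `r`. -/
theorem exists_perm_le_of_rank_le {n r : ℕ} {a σ : Fin n → ℝ} {A : Matrix (Fin n) (Fin n) ℝ}
    (ha : Monotone a) (hA : A.IsHermitian) (hrank : A.rank ≤ r)
    (hσ : (diagonal a + A).charpoly = ∏ i, (X - C (σ i))) :
    ∃ p : Equiv.Perm (Fin n), ∀ i : Fin n, r ≤ (i : ℕ) → σ (p i) ≤ a i := by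
  obtain ⟨ρ, hρ⟩ := exists_perm_val_add_eq n r
  obtain ⟨v, hv⟩ := exists_orthonormalBasis_of_charpoly_eq_prod (σ := σ ∘ Tuple.sort σ)
    ((isHermitian_diagonal a).add hA)
    (hσ.trans (Equiv.prod_comp (Tuple.sort σ) fun i => X - C (σ i)).symm)
  have he (i : Fin n) : toEuclideanLin (diagonal a) (EuclideanSpace.basisFun (Fin n) ℝ i) =
      a i • EuclideanSpace.basisFun (Fin n) ℝ i := by
    ext j
    simp [toLpLin_apply]
  refine ⟨ρ.trans (Tuple.sort σ), fun i hi => ?_⟩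
  refine eigenvalue_le_eigenvalue_of_re_inner_le hv he (Tuple.monotone_sort σ) ha
    (N := LinearMap.ker (toEuclideanLin A)) (fun x hx => ?_) ?_
  · rw [map_add, LinearMap.add_apply, LinearMap.mem_ker.1 hx, add_zero]
  · have hdim := finrank_ker_toEuclideanLin_add_rank A
    rw [Fintype.card_fin] at hdim
    have := hρ i hi
    omega

theorem sum_sq_orthonormalBasis_apply {ι κ : Type*} [Fintype ι] [Fintype κ]
    (v : OrthonormalBasis κ ℝ (EuclideanSpace ℝ ι)) (i : ι) : ∑ k, v k i ^ 2 = 1 := by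
  classical
  simpa [EuclideanSpace.inner_single_right] using
    v.sum_sq_norm_inner_right (EuclideanSpace.single i (1 : ℝ))

theorem sum_orthonormalBasis_sq_apply {ι κ : Type*} [Fintype ι] [Fintype κ]
    (v : OrthonormalBasis κ ℝ (EuclideanSpace ℝ ι)) (k : κ) : ∑ i, v k i ^ 2 = 1 := by
  rw [← EuclideanSpace.real_norm_sq_eq, v.norm_eq_one, one_pow]

/- The equality case of the bathtub principle: with `θ` the largest value of `c` off `s`,
every term of `∑ i, (c i - θ) * (s.piecewise 1 0 i - q i) ≤ 0` is nonnegative. -/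
theorem eq_zero_of_sum_le_sum_mul {ι : Type*} [Fintype ι] {s : Finset ι} {c q : ι → ℝ}
    (hc : ∀ i, 0 ≤ c i)
    (hgap : ∀ i ∈ s, ∀ j ∉ s, c j < c i) (hq0 : ∀ i, 0 ≤ q i) (hq1 : ∀ i, q i ≤ 1)
    (hq : ∑ i, q i ≤ #s) (hsum : ∑ i ∈ s, c i ≤ ∑ i, c i * q i) {j : ι} (hj : j ∉ s) :
    q j = 0 := by
  classical
  obtain ⟨m, hm, hmax⟩ := exists_max_image sᶜ c ⟨j, mem_compl.2 hj⟩
  have hsplit (x : ι → ℝ) : ∑ i, x i = ∑ i ∈ s, x i + ∑ i ∈ sᶜ, x i :=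
    (sum_add_sum_compl s x).symm
  have hin : ∀ i ∈ s, 0 ≤ (c i - c m) * (1 - q i) := fun i hi =>
    mul_nonneg (sub_nonneg.2 (hgap i hi m (mem_compl.1 hm)).le) (sub_nonneg.2 (hq1 i))
  have hout : ∀ i ∈ sᶜ, 0 ≤ (c m - c i) * q i := fun i hi =>
    mul_nonneg (sub_nonneg.2 (hmax i hi)) (hq0 i)
  have htotal : ∑ i ∈ s, (c i - c m) * (1 - q i) + ∑ i ∈ sᶜ, (c m - c i) * q i ≤ 0 := by
    have hexpand : ∑ i ∈ s, (c i - c m) * (1 - q i) + ∑ i ∈ sᶜ, (c m - c i) * q i =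
        ∑ i ∈ s, c i - ∑ i, c i * q i - c m * (#s - ∑ i, q i) := by
      simp only [hsplit, mul_sub, sub_mul, sum_sub_distrib, ← mul_sum, sum_const, nsmul_eq_mul,
        mul_one]
      ring
    nlinarith [hc m]
  have hzero : ∑ i ∈ s, (c i - c m) * (1 - q i) = 0 :=
    le_antisymm (by linarith [sum_nonneg hout]) (sum_nonneg hin)
  have hone : ∀ i ∈ s, q i = 1 := fun i hi => by
    have hmul := (sum_eq_zero_iff_of_nonneg hin).1 hzero i hi
    have hpos := sub_pos.2 (hgap i hi m (mem_compl.1 hm))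
    linarith [(mul_eq_zero.1 hmul).resolve_left hpos.ne']
  rw [hsplit, sum_congr rfl hone, sum_const, nsmul_one, add_le_iff_nonpos_right] at hq
  exact (sum_eq_zero_iff_of_nonneg fun i _ => hq0 i).1
    (hq.antisymm (sum_nonneg fun i _ => hq0 i)) j (mem_compl.2 hj)

open scoped ComplexOrder in
theorem apply_eq_zero_of_apply_self_eq_zero {𝕜 ι : Type*} [RCLike 𝕜] [Finite ι]
    {A : Matrix ι ι 𝕜} (hA : A.PosSemidef) {j : ι} (hj : A j j = 0) (i : ι) : A i j = 0 := by
  classical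
  have := Fintype.ofFinite ι
  have hmul : A *ᵥ Pi.single j 1 = 0 :=
    (hA.dotProduct_mulVec_zero_iff (Pi.single j 1)).1 (by simp [hj])
  simpa using congrFun hmul i

section Rigidity

variable {ι : Type*} [Fintype ι] [DecidableEq ι] {s : Finset ι} {c : ι → ℝ}

theorem apply_self_eq_sum_mul_sq {A : Matrix ι ι ℝ} {α : ι → ℝ}
    {v : OrthonormalBasis ι ℝ (EuclideanSpace ℝ ι)}
    (hv : ∀ k, toEuclideanLin A (v k) = α k • v k) (i : ι) : A i i = ∑ k, α k * v k i ^ 2 := by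
  simpa [toLpLin_apply, EuclideanSpace.inner_single_left, EuclideanSpace.inner_single_right] using
    re_inner_map_self_eq_sum hv (EuclideanSpace.single i (1 : ℝ))

theorem eigenvalue_le_sum_mul_sq {A : Matrix ι ι ℝ} (hle : (diagonal c - A).PosSemidef) {α : ℝ}
    {x : ι → ℝ} (hx : ∑ i, x i ^ 2 = 1) (hAx : A *ᵥ x = α • x) : α ≤ ∑ i, c i * x i ^ 2 := by
  have hnorm : x ⬝ᵥ x = 1 := by simpa only [dotProduct, ← sq] using hx
  have hnonneg := hle.dotProduct_mulVec_nonneg x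
  rw [star_trivial, sub_mulVec, hAx, dotProduct_sub, sub_nonneg, dotProduct_smul, hnorm,
    smul_eq_mul, mul_one] at hnonneg
  refine hnonneg.trans_eq (sum_congr rfl fun i _ => ?_)
  rw [mulVec_diagonal]
  ring

theorem apply_self_eq_zero_of_sum_le_trace {A : Matrix ι ι ℝ} (hA : A.PosSemidef)
    (hle : (diagonal c - A).PosSemidef) (hrank : A.rank ≤ #s)
    (hgap : ∀ i ∈ s, ∀ j ∉ s, c j < c i) (htrace : ∑ i ∈ s, c i ≤ A.trace) {j : ι} (hj : j ∉ s) :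
    A j j = 0 := by
  set α := hA.1.eigenvalues
  set v := hA.1.eigenvectorBasis
  let K : Finset ι := univ.filter fun k => α k ≠ 0
  have hc (i : ι) : 0 ≤ c i := by
    have hdiag := add_nonneg (hle.diag_nonneg (i := i)) (hA.diag_nonneg (i := i))
    simpa using hdiag
  have hq1 (i : ι) : ∑ k ∈ K, v k i ^ 2 ≤ 1 := by
    rw [← sum_sq_orthonormalBasis_apply v i]
    exact sum_le_univ_sum_of_nonneg fun k => sq_nonneg _
  have hq : ∑ i, ∑ k ∈ K, v k i ^ 2 ≤ #s := by
    have hK : #K = A.rank := by rw [hA.1.rank_eq_card_non_zero_eigs, Fintype.card_subtype]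
    rw [sum_comm, sum_congr rfl fun k _ => sum_orthonormalBasis_sq_apply v k, sum_const,
      nsmul_one, hK]
    exact_mod_cast hrank
  have hsum : A.trace ≤ ∑ i, c i * ∑ k ∈ K, v k i ^ 2 := by
    calc A.trace = ∑ k ∈ K, α k := by
          rw [hA.1.trace_eq_sum_eigenvalues, sum_filter_ne_zero]; rfl
      _ ≤ ∑ k ∈ K, ∑ i, c i * v k i ^ 2 :=
          sum_le_sum fun k _ => eigenvalue_le_sum_mul_sq hle
            (sum_orthonormalBasis_sq_apply v k) (hA.1.mulVec_eigenvectorBasis k)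
      _ = ∑ i, c i * ∑ k ∈ K, v k i ^ 2 := by
          rw [sum_comm]
          simp only [mul_sum]
  have hqj : ∑ k ∈ K, v k j ^ 2 = 0 :=
    eq_zero_of_sum_le_sum_mul hc hgap (fun i => sum_nonneg fun k _ => sq_nonneg _) hq1 hq
      (htrace.trans hsum) hj
  rw [apply_self_eq_sum_mul_sq (toEuclideanLin_eigenvectorBasis hA.1)]
  refine sum_eq_zero fun k _ => mul_eq_zero.2 (or_iff_not_imp_left.2 fun hk => ?_)
  exact (sum_eq_zero_iff_of_nonneg fun k _ => sq_nonneg _).1 hqj k (by simpa [K] using hk)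

theorem eq_diagonal_of_sum_le_trace {A : Matrix ι ι ℝ} (hA : A.PosSemidef)
    (hle : (diagonal c - A).PosSemidef) (hrank : A.rank ≤ #s)
    (hgap : ∀ i ∈ s, ∀ j ∉ s, c j < c i) (htrace : ∑ i ∈ s, c i ≤ A.trace) :
    A = diagonal (s.piecewise c 0) := by
  have hout : ∀ j ∉ s, A j j = 0 := fun j =>
    apply_self_eq_zero_of_sum_le_trace hA hle hrank hgap htrace
  have hdiag (i : ι) : A i i ≤ c i := by
    simpa using hle.diag_nonneg (i := i)
  have htr : A.trace = ∑ i ∈ s, A i i :=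
    (sum_subset (subset_univ s) fun j _ hj => hout j hj).symm
  have hin : ∀ i ∈ s, A i i = c i :=
    (sum_eq_sum_iff_of_le fun i _ => hdiag i).1
      (le_antisymm (sum_le_sum fun i _ => hdiag i) (htrace.trans_eq htr))
  ext i j
  by_cases hj : j ∈ s
  · have hjj : (diagonal c - A) j j = 0 := by simp [hin j hj]
    have hzero := apply_eq_zero_of_apply_self_eq_zero hle hjj i
    rw [Matrix.sub_apply, sub_eq_zero] at hzero
    rw [← hzero]
    rcases eq_or_ne i j with rfl | hij
    · simp [hj]
    · simp [hij]
  · rw [apply_eq_zero_of_apply_self_eq_zero hA (hout j hj) i]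
    rcases eq_or_ne i j with rfl | hij
    · simp [hj]
    · simp [hij]

theorem diagonal_add_eq_of_charpoly_eq {a : ι → ℝ} {A : Matrix ι ι ℝ} (ha : ∀ i, a i ≤ 1)
    (hA : A.PosSemidef) (hrank : A.rank ≤ #s) (hgap : ∀ i ∈ s, ∀ j ∉ s, a i < a j)
    (hchar : (diagonal a + A).charpoly = (diagonal (s.piecewise 1 a)).charpoly) :
    diagonal a + A = diagonal (s.piecewise 1 a) := by
  have hle : (diagonal (1 - a) - A).PosSemidef := by
    have hone := posSemidef_one_sub_of_charpoly_eq_prod ((isHermitian_diagonal a).add hA.1)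
      (hchar.trans (charpoly_diagonal _)) fun i => by by_cases hi : i ∈ s <;> simp [hi, ha i]
    convert hone using 1
    rw [sub_add_eq_sub_sub, ← diagonal_one, diagonal_sub]
    rfl
  have htrace : ∑ i ∈ s, (1 - a) i ≤ A.trace := by
    have htr : (diagonal a + A).trace = (diagonal (s.piecewise 1 a)).trace := by
      rw [trace_eq_neg_charpoly_nextCoeff, hchar, ← trace_eq_neg_charpoly_nextCoeff]
    have hsplit : ∑ i, (s.piecewise (1 : ι → ℝ) a i - a i) = ∑ i ∈ s, (1 - a) i := by
      rw [← sum_subset (subset_univ s) fun i _ hi => by simp [hi]]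
      exact sum_congr rfl fun i hi => by simp [hi]
    rw [trace_add, trace_diagonal, trace_diagonal] at htr
    rw [← hsplit, sum_sub_distrib]
    linarith
  rw [eq_diagonal_of_sum_le_trace hA hle hrank
    (fun i hi j hj => sub_lt_sub_left (hgap i hi j hj) 1) htrace, diagonal_add]
  congr 1
  ext i
  by_cases hi : i ∈ s <;> simp [hi]

end Rigidity

section Congruence

variable {R ι : Type*} [CommRing R] [Fintype ι] [DecidableEq ι] {Y Q M N : Matrix ι ι R}

theorem mul_transpose_mul_self_eq_one (hY : Y * Q * Yᵀ = 1) : Q * (Yᵀ * Y) = 1 := by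
  rw [Matrix.mul_assoc, mul_eq_one_comm, Matrix.mul_assoc] at hY
  exact hY

theorem eq_of_mul_mul_transpose_eq (hY : Y * Q * Yᵀ = 1) (h : Y * M * Yᵀ = Y * N * Yᵀ) :
    M = N := by
  have hunit : IsUnit Y := .of_mul_eq_one (Q * Yᵀ) (by rw [← Matrix.mul_assoc, hY])
  exact hunit.mul_left_cancel (((isUnit_transpose Y).2 hunit).mul_right_cancel h)

theorem isGenEigs_iff_charpoly_eq {n : ℕ} {Y Q M : Matrix (Fin n) (Fin n) ℝ}
    (hY : Y * Q * Yᵀ = 1) {σ : Fin n → ℝ} :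
    IsGenEigs M Q σ ↔ (Y * M * Yᵀ).charpoly = ∏ i, (X - C (σ i)) := by
  rw [IsGenEigs, inv_eq_right_inv (mul_transpose_mul_self_eq_one hY), Matrix.mul_assoc,
    charpoly_mul_comm]

variable {H P : Matrix ι ι R} {w : ι → ι → R}

theorem of_mul_mul_transpose_of_eq_one
    (hnorm : ∀ i j, w i ⬝ᵥ (P *ᵥ w j) = if i = j then (1 : R) else 0) :
    of w * P * (of w)ᵀ = 1 := by
  ext i j
  rw [mul_mul_apply, one_apply]
  exact hnorm i j

theorem of_mul_mul_transpose_of_eq_diagonal {d : ι → R}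
    (heig : ∀ i, H *ᵥ w i = d i • (P *ᵥ w i))
    (hnorm : ∀ i j, w i ⬝ᵥ (P *ᵥ w j) = if i = j then (1 : R) else 0) :
    of w * H * (of w)ᵀ = diagonal d := by
  ext i j
  rw [mul_mul_apply]
  change w i ⬝ᵥ (H *ᵥ w j) = _
  rw [heig, dotProduct_smul, hnorm, diagonal_apply, smul_eq_mul]
  split_ifs with hij <;> simp [hij]

end Congruence

section Whitening

variable {ι : Type*} [Fintype ι] [DecidableEq ι] {H P : Matrix ι ι ℝ} {δ : ι → ℝ}
  {w : ι → ι → ℝ}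

/-- The matrix with rows `(1 + δ i ^ 2) ^ (-1/2) • w i`. For generalized eigenvectors `w` of
`(H, P)`, congruence by it turns `H + P` into the identity. -/
noncomputable def whitening (δ : ι → ℝ) (w : ι → ι → ℝ) : Matrix ι ι ℝ :=
  diagonal (fun i => (√(1 + δ i ^ 2))⁻¹) * of w

theorem whitening_mul_mul_transpose (M : Matrix ι ι ℝ) :
    whitening δ w * M * (whitening δ w)ᵀ = diagonal (fun i => (√(1 + δ i ^ 2))⁻¹) *
      (of w * M * (of w)ᵀ) * diagonal fun i => (√(1 + δ i ^ 2))⁻¹ := by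
  simp only [whitening, transpose_mul, diagonal_transpose, Matrix.mul_assoc]

theorem inv_sqrt_mul_inv_sqrt_one_add_sq (x : ℝ) :
    (√(1 + x ^ 2))⁻¹ * (√(1 + x ^ 2))⁻¹ = (1 + x ^ 2)⁻¹ := by
  rw [← mul_inv, Real.mul_self_sqrt (by positivity)]

theorem whitening_mul_mul_transpose_eq_diagonal
    (hnorm : ∀ i j, w i ⬝ᵥ (P *ᵥ w j) = if i = j then (1 : ℝ) else 0) :
    whitening δ w * P * (whitening δ w)ᵀ = diagonal fun i => (1 + δ i ^ 2)⁻¹ := by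
  rw [whitening_mul_mul_transpose, of_mul_mul_transpose_of_eq_one hnorm, Matrix.mul_one,
    diagonal_mul_diagonal]
  simp only [inv_sqrt_mul_inv_sqrt_one_add_sq]

theorem whitening_mul_add_mul_transpose_eq_one
    (heig : ∀ i, H *ᵥ w i = δ i ^ 2 • (P *ᵥ w i))
    (hnorm : ∀ i j, w i ⬝ᵥ (P *ᵥ w j) = if i = j then (1 : ℝ) else 0) :
    whitening δ w * (H + P) * (whitening δ w)ᵀ = 1 := by
  rw [Matrix.mul_add, Matrix.add_mul, whitening_mul_mul_transpose_eq_diagonal hnorm,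
    whitening_mul_mul_transpose, of_mul_mul_transpose_of_eq_diagonal heig hnorm,
    diagonal_mul_diagonal, diagonal_mul_diagonal, diagonal_add, ← diagonal_one]
  congr 1
  ext i
  rw [mul_right_comm, inv_sqrt_mul_inv_sqrt_one_add_sq]
  field_simp
  ring

/-- The precision `P + ∑ i ∈ s, δ i ^ 2 • (P w i) (P w i)ᵀ`: the prior precision `P` updated along
the generalized eigenvectors with index in `s`. -/
def lowRankPrecision (P : Matrix ι ι ℝ) (δ : ι → ℝ) (w : ι → ι → ℝ) (s : Finset ι) :
    Matrix ι ι ℝ :=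
  P + ∑ i ∈ s, δ i ^ 2 • vecMulVec (P *ᵥ w i) (P *ᵥ w i)

variable (P δ w) in
/-- A factor `J` of rank at most `#s` with `lowRankPrecision P δ w s = P + J * Jᵀ`. -/
def lowRankFactor (s : Finset ι) : Matrix ι ι ℝ :=
  P * (of w)ᵀ * diagonal (s.piecewise δ 0)

theorem rank_lowRankFactor_le (s : Finset ι) : (lowRankFactor P δ w s).rank ≤ #s := by
  refine (rank_mul_le_right _ _).trans ?_
  rw [rank_diagonal, Fintype.card_subtype]
  exact card_le_card fun i hi => by
    by_contra his
    simp [his] at hi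

theorem lowRankPrecision_eq_add_mul_transpose (s : Finset ι) :
    lowRankPrecision P δ w s = P + lowRankFactor P δ w s * (lowRankFactor P δ w s)ᵀ := by
  have hentry (i j : ι) : lowRankFactor P δ w s i j = (P *ᵥ w j) i * s.piecewise δ 0 j :=
    mul_diagonal _ _ _ _
  rw [lowRankPrecision, add_right_inj]
  ext i j
  rw [Matrix.sum_apply, mul_apply, ← sum_subset (subset_univ s) fun k _ hk => by simp [hentry, hk]]
  refine sum_congr rfl fun k hk => ?_
  rw [transpose_apply, hentry, hentry, piecewise_eq_of_mem _ _ _ hk, Matrix.smul_apply,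
    vecMulVec_apply, smul_eq_mul]
  ring

theorem whitening_mul_lowRankPrecision_mul_transpose (s : Finset ι)
    (hnorm : ∀ i j, w i ⬝ᵥ (P *ᵥ w j) = if i = j then (1 : ℝ) else 0) :
    whitening δ w * lowRankPrecision P δ w s * (whitening δ w)ᵀ =
      diagonal (s.piecewise 1 fun i => (1 + δ i ^ 2)⁻¹) := by
  have hfactor : whitening δ w * lowRankFactor P δ w s =
      diagonal fun i => (√(1 + δ i ^ 2))⁻¹ * s.piecewise δ 0 i := by
    rw [whitening, lowRankFactor, ← Matrix.mul_assoc, Matrix.mul_assoc _ (of w),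
      ← Matrix.mul_assoc (of w), of_mul_mul_transpose_of_eq_one hnorm, Matrix.mul_one,
      diagonal_mul_diagonal]
  rw [lowRankPrecision_eq_add_mul_transpose, Matrix.mul_add, Matrix.add_mul,
    whitening_mul_mul_transpose_eq_diagonal hnorm, ← Matrix.mul_assoc, hfactor, Matrix.mul_assoc,
    ← transpose_mul, hfactor, diagonal_transpose, diagonal_mul_diagonal, diagonal_add]
  congr 1
  ext i
  rw [mul_mul_mul_comm, inv_sqrt_mul_inv_sqrt_one_add_sq]
  by_cases hi : i ∈ s
  · simp only [hi, piecewise_eq_of_mem, Pi.one_apply]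
    field_simp
  · simp [hi]

end Whitening

section OptimalSpectrum

variable {n r : ℕ} {f : ℝ → ℝ} {a σ : Fin n → ℝ} {A : Matrix (Fin n) (Fin n) ℝ}

/-- The spectrum obtained from `a` by raising its first `r` entries to `1`. When `a` is increasing
with values in `(0, 1]`, it has the least loss among the spectra of the matrices `diagonal a + A`
with `A` positive semidefinite of rank at most `r`. -/
def optimalSpectrum (r : ℕ) (a : Fin n → ℝ) : Fin n → ℝ :=
  (univ.filter fun i : Fin n => (i : ℕ) < r).piecewise 1 a

theorem optimalSpectrum_le_one (ha1 : ∀ i, a i ≤ 1) (i : Fin n) : optimalSpectrum r a i ≤ 1 :=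
  piecewise_le_of_le_of_le _ (fun _ => le_rfl) ha1 i

theorem exists_perm_le_optimalSpectrum_or_eq_one (ha : Monotone a) (hA : A.IsHermitian)
    (hrank : A.rank ≤ r) (hσ : (diagonal a + A).charpoly = ∏ i, (X - C (σ i))) :
    ∃ p : Equiv.Perm (Fin n), ∀ i,
      σ (p i) ≤ optimalSpectrum r a i ∨ optimalSpectrum r a i = 1 := by
  obtain ⟨p, hp⟩ := exists_perm_le_of_rank_le ha hA hrank hσ
  refine ⟨p, fun i => ?_⟩
  rcases lt_or_ge (i : ℕ) r with hi | hi
  · simp [optimalSpectrum, hi]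
  · simpa [optimalSpectrum, hi.not_gt] using .inl (hp i hi)

theorem sum_apply_optimalSpectrum_le_of_rank_le (hanti : StrictAntiOn f (Set.Ioc 0 1))
    (hone : ∀ x, 1 < x → f 1 < f x) (ha : Monotone a) (ha0 : ∀ i, 0 < a i) (ha1 : ∀ i, a i ≤ 1)
    (hA : A.PosSemidef) (hrank : A.rank ≤ r)
    (hσ : (diagonal a + A).charpoly = ∏ i, (X - C (σ i))) :
    ∑ i, f (optimalSpectrum r a i) ≤ ∑ i, f (σ i) := by
  obtain ⟨p, hp⟩ := exists_perm_le_optimalSpectrum_or_eq_one ha hA.1 hrank hσ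
  have hσ0 := pos_of_charpoly_eq_prod ((PosDef.diagonal ha0).add_posSemidef hA) hσ
  rw [← Equiv.sum_comp p fun i => f (σ i)]
  exact sum_le_sum fun i _ => apply_le_apply_of_le_or_eq_one hanti hone (hσ0 (p i))
    (optimalSpectrum_le_one ha1 i) (hp i)

theorem diagonal_add_eq_diagonal_optimalSpectrum (hanti : StrictAntiOn f (Set.Ioc 0 1))
    (hone : ∀ x, 1 < x → f 1 < f x) (ha : Monotone a) (ha0 : ∀ i, 0 < a i) (ha1 : ∀ i, a i ≤ 1)
    (hgap : ∀ i j : Fin n, i < j → (j : ℕ) = r → a i < a j) (hA : A.PosSemidef)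
    (hrank : A.rank ≤ r) (hσ : (diagonal a + A).charpoly = ∏ i, (X - C (σ i)))
    (hsum : ∑ i, f (σ i) ≤ ∑ i, f (optimalSpectrum r a i)) :
    diagonal a + A = diagonal (optimalSpectrum r a) := by
  obtain ⟨p, hp⟩ := exists_perm_le_optimalSpectrum_or_eq_one ha hA.1 hrank hσ
  have hσ0 := pos_of_charpoly_eq_prod ((PosDef.diagonal ha0).add_posSemidef hA) hσ
  have hσp : σ ∘ p = optimalSpectrum r a :=
    eq_of_sum_apply_le_sum_apply hanti hone (fun i => hσ0 (p i)) (optimalSpectrum_le_one ha1) hp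
      ((Equiv.sum_comp p fun i => f (σ i)).trans_le hsum)
  have hcard : A.rank ≤ #(univ.filter fun i : Fin n => (i : ℕ) < r) := by
    rw [Fin.card_filter_val_lt]
    exact le_min A.rank_le_width hrank
  refine diagonal_add_eq_of_charpoly_eq ha1 hA hcard (fun i hi j hj => ?_) ?_
  · rw [mem_filter_univ] at hi hj
    have hrn : r < n := (not_lt.1 hj).trans_lt j.2
    exact (hgap i ⟨r, hrn⟩ hi rfl).trans_le (ha (not_lt.1 hj))
  · rw [hσ, charpoly_diagonal]
    change _ = ∏ i, (X - C (optimalSpectrum r a i))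
    rw [← hσp]
    exact (Equiv.prod_comp p fun i => X - C (σ i)).symm

end OptimalSpectrum

section PosteriorPrecision

variable {n r : ℕ} {Γpr H : Matrix (Fin n) (Fin n) ℝ} {δ : Fin n → ℝ} {w : Fin n → Fin n → ℝ}

theorem whitening_mul_inv_mul_transpose_eq_one {Γpos : Matrix (Fin n) (Fin n) ℝ}
    (hΓpos : Γpos = (H + Γpr⁻¹)⁻¹) (heig : ∀ i, H *ᵥ w i = δ i ^ 2 • (Γpr⁻¹ *ᵥ w i))
    (hnorm : ∀ i j, w i ⬝ᵥ (Γpr⁻¹ *ᵥ w j) = if i = j then (1 : ℝ) else 0) :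
    whitening δ w * Γpos⁻¹ * (whitening δ w)ᵀ = 1 := by
  have hadd := whitening_mul_add_mul_transpose_eq_one heig hnorm
  rwa [hΓpos, nonsing_inv_nonsing_inv _
    (isUnit_det_of_right_inverse (mul_transpose_mul_self_eq_one hadd))]

theorem exists_posSemidef_of_mem_MInvClass {Bt : Matrix (Fin n) (Fin n) ℝ}
    (hnorm : ∀ i j, w i ⬝ᵥ (Γpr⁻¹ *ᵥ w j) = if i = j then (1 : ℝ) else 0)
    (hBt : Bt ∈ MInvClass Γpr r) : ∃ A : Matrix (Fin n) (Fin n) ℝ, A.PosSemidef ∧ A.rank ≤ r ∧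
      whitening δ w * Bt * (whitening δ w)ᵀ = diagonal (fun i => (1 + δ i ^ 2)⁻¹) + A := by
  obtain ⟨J, hJ, rfl⟩ := hBt
  refine ⟨whitening δ w * J * (whitening δ w * J)ᵀ, posSemidef_self_mul_conjTranspose _,
    (rank_mul_le_left _ _).trans ((rank_mul_le_right _ _).trans hJ), ?_⟩
  rw [Matrix.mul_add, Matrix.add_mul, whitening_mul_mul_transpose_eq_diagonal hnorm]
  simp only [transpose_mul, Matrix.mul_assoc]

theorem lowRankPrecision_mem_MInvClass : lowRankPrecision Γpr⁻¹ δ w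
    (univ.filter fun i : Fin n => (i : ℕ) < r) ∈ MInvClass Γpr r := by
  refine ⟨_, (rank_lowRankFactor_le _).trans ?_, lowRankPrecision_eq_add_mul_transpose _⟩
  rw [Fin.card_filter_val_lt]
  exact min_le_right n r

theorem monotone_inv_one_add_sq {ι : Type*} [Preorder ι] {δ : ι → ℝ}
    (hδ : Antitone fun i => δ i ^ 2) : Monotone fun i => (1 + δ i ^ 2)⁻¹ := fun i j hij => by
  have hsq : δ j ^ 2 ≤ δ i ^ 2 := hδ hij
  dsimp only
  gcongr

theorem optimal_posterior_precision_approx_general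
    {Γpos : Matrix (Fin n) (Fin n) ℝ} (hΓpos : Γpos = (H + Γpr⁻¹)⁻¹)
    (hord : ∀ i j : Fin n, i ≤ j → δ j ^ 2 ≤ δ i ^ 2)
    (heig : ∀ i, H *ᵥ w i = δ i ^ 2 • (Γpr⁻¹ *ᵥ w i))
    (hnorm : ∀ i j, w i ⬝ᵥ (Γpr⁻¹ *ᵥ w j) = if i = j then (1 : ℝ) else 0)
    {f : ℝ → ℝ} (hanti : StrictAntiOn f (Set.Ioc 0 1)) (hone : ∀ x, 1 < x → f 1 < f x)
    {Bhat : Matrix (Fin n) (Fin n) ℝ}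
    (hBhat : Bhat = lowRankPrecision Γpr⁻¹ δ w (univ.filter fun i : Fin n => (i : ℕ) < r)) :
    Bhat ∈ MInvClass Γpr r ∧
    (∀ Bt ∈ MInvClass Γpr r, ∀ σ σ' : Fin n → ℝ,
      IsGenEigs Bhat Γpos⁻¹ σ → IsGenEigs Bt Γpos⁻¹ σ' → ∑ i, f (σ i) ≤ ∑ i, f (σ' i)) ∧
    ((∀ i j : Fin n, i < j → (j : ℕ) = r → δ j ^ 2 < δ i ^ 2) →
      ∀ Bt ∈ MInvClass Γpr r, ∀ σ σ' : Fin n → ℝ,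
        IsGenEigs Bt Γpos⁻¹ σ → IsGenEigs Bhat Γpos⁻¹ σ' → ∑ i, f (σ i) ≤ ∑ i, f (σ' i) →
        Bt = Bhat) := by
  subst hBhat
  let a : Fin n → ℝ := fun i => (1 + δ i ^ 2)⁻¹
  have ha : Monotone a := monotone_inv_one_add_sq fun i j => hord i j
  have ha0 (i : Fin n) : 0 < a i := by positivity
  have ha1 (i : Fin n) : a i ≤ 1 := inv_le_one_of_one_le₀ (le_add_of_nonneg_right (sq_nonneg _))
  have hY := whitening_mul_inv_mul_transpose_eq_one hΓpos heig hnorm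
  have hYBhat := whitening_mul_lowRankPrecision_mul_transpose (δ := δ)
    (univ.filter fun i : Fin n => (i : ℕ) < r) hnorm
  have hopt {σ : Fin n → ℝ} (hσ : IsGenEigs (lowRankPrecision Γpr⁻¹ δ w
      (univ.filter fun i : Fin n => (i : ℕ) < r)) Γpos⁻¹ σ) :
      ∑ i, f (σ i) = ∑ i, f (optimalSpectrum r a i) := by
    rw [isGenEigs_iff_charpoly_eq hY, hYBhat, charpoly_diagonal] at hσ
    exact (sum_apply_eq_of_prod_X_sub_C_eq hσ f).symm
  refine ⟨lowRankPrecision_mem_MInvClass, fun Bt hBt σ σ' hσ hσ' => ?_,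
    fun hgap Bt hBt σ σ' hσ hσ' hle => ?_⟩
  · obtain ⟨A, hA, hrank, hYBt⟩ := exists_posSemidef_of_mem_MInvClass (δ := δ) hnorm hBt
    rw [isGenEigs_iff_charpoly_eq hY, hYBt] at hσ'
    rw [hopt hσ]
    exact sum_apply_optimalSpectrum_le_of_rank_le hanti hone ha ha0 ha1 hA hrank hσ'
  · obtain ⟨A, hA, hrank, hYBt⟩ := exists_posSemidef_of_mem_MInvClass (δ := δ) hnorm hBt
    rw [isGenEigs_iff_charpoly_eq hY, hYBt] at hσ
    rw [hopt hσ'] at hle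
    refine eq_of_mul_mul_transpose_eq hY (hYBt.trans (.trans ?_ hYBhat.symm))
    refine diagonal_add_eq_diagonal_optimalSpectrum hanti hone ha ha0 ha1 (fun i j hij hj => ?_)
      hA hrank hσ hle
    have hsq := hgap i j hij hj
    gcongr

end PosteriorPrecision

/-- Corollary 3.1 (optimal posterior precision approximation):
`B̂ = Γpr⁻¹ + Σ_{i≤r} δᵢ² w̃ᵢ w̃ᵢᵀ` minimizes `L(B, Γpos⁻¹)` over `𝓜_r⁻¹`; it is the
unique minimizer when the first `r+1` generalized eigenvalues are strictly decreasing. -/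
theorem optimal_posterior_precision_approx
    (n m r : ℕ) (hn : 0 < n) (hm : 0 < m) (hr : r ≤ n)
    (G : Matrix (Fin m) (Fin n) ℝ)
    (Γobs : Matrix (Fin m) (Fin m) ℝ) (hobs : Γobs.PosDef)
    (Γpr : Matrix (Fin n) (Fin n) ℝ) (hpr : Γpr.PosDef)
    (H Γpos : Matrix (Fin n) (Fin n) ℝ)
    (hH : H = Gᵀ * Γobs⁻¹ * G)
    (hΓpos : Γpos = (H + Γpr⁻¹)⁻¹)
    (δ : Fin n → ℝ) (w : Fin n → Fin n → ℝ)
    (hδ : ∀ i, 0 ≤ δ i)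
    (hord : ∀ i j : Fin n, i ≤ j → (δ j) ^ 2 ≤ (δ i) ^ 2)
    (heig : ∀ i, H *ᵥ w i = (δ i) ^ 2 • (Γpr⁻¹ *ᵥ w i))
    (hnorm : ∀ i j, w i ⬝ᵥ (Γpr⁻¹ *ᵥ w j) = if i = j then (1:ℝ) else 0)
    (f : ℝ → ℝ) (hf : MemU f)
    (wt : Fin n → Fin n → ℝ) (hwt : ∀ i, wt i = Γpr⁻¹ *ᵥ w i)
    (Bhat : Matrix (Fin n) (Fin n) ℝ)
    (hBhat : Bhat = Γpr⁻¹ + ∑ i ∈ Finset.univ.filter (fun i : Fin n => (i : ℕ) < r),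
      (δ i) ^ 2 • vecMulVec (wt i) (wt i)) :
    Bhat ∈ MInvClass Γpr r ∧
    (∀ Bt ∈ MInvClass Γpr r, ∀ σ σ' : Fin n → ℝ,
      IsGenEigs Bhat Γpos⁻¹ σ → IsGenEigs Bt Γpos⁻¹ σ' →
      ∑ i, f (σ i) ≤ ∑ i, f (σ' i)) ∧
    ((∀ i j : Fin n, i < j → (j : ℕ) ≤ r → (δ j) ^ 2 < (δ i) ^ 2) →
      ∀ Bt ∈ MInvClass Γpr r,
        (∃ σ σ' : Fin n → ℝ, IsGenEigs Bt Γpos⁻¹ σ ∧ IsGenEigs Bhat Γpos⁻¹ σ' ∧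
          ∑ i, f (σ i) = ∑ i, f (σ' i)) →
        Bt = Bhat) := by
  obtain rfl : wt = fun i => Γpr⁻¹ *ᵥ w i := funext hwt
  obtain ⟨hmem, hmin, huniq⟩ := optimal_posterior_precision_approx_general hΓpos hord heig hnorm
    hf.strictAntiOn (fun _ => hf.apply_one_lt) hBhat
  exact ⟨hmem, hmin, fun hgap Bt hBt ⟨σ, σ', hσ, hσ', heq⟩ =>
    huniq (fun i j hij hj => hgap i j hij hj.le) Bt hBt σ σ' hσ hσ' heq.le⟩
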